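/- Let b, c, d ∈ F_q[T] be distinct polynomials of degree at least one. There exist positive constants C_1, C_2 depending only on b, c and positive constants C_3, C_4 depending only on b, c, d with the following properties. For every integer n ≥ 1 and all polynomials a_1, …, a_{n−1} ∈ F_q[T] of degree at least one: (1) ξ := [0, a_1, …, a_{n−1}, c, \overline{b}] is quadratic over F_q(T) and C_1 |q_n|² ≤ H(ξ) ≤ C_2 |q_n|², where (p_k/q_k) are the convergents of ξ; (2) for every integer m ≥ 2, ζ := [0, a_1, …, a_{n−1}, c, \overline{b, …, b, d}] (the period block having length m, consisting of m−1 copies of b followed by d) is quadratic over F_q(T) and C_3 |q̃_n q̃_{n+m}| ≤ H(ζ) ≤ C_4 |q̃_n q̃_{n+m}|, where (p̃_k/q̃_k) are the convergents of ζ. -/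

import Mathlib

open Polynomial Filter
open scoped ENNReal

noncomputable section

namespace Ooto

variable (Fq : Type) [Field Fq] [Fintype Fq]

/-- `F_q((T⁻¹))`, realized as formal Laurent series in the variable `X = T⁻¹`. -/
abbrev K := LaurentSeries Fq

/-- The element `T = X⁻¹` of `F_q((T⁻¹))`. -/
def TT : K Fq := HahnSeries.single (-1 : ℤ) (1 : Fq)

/-- The natural embedding of `F_q[T]` into `F_q((T⁻¹))`, sending `T` to `T`. -/
def polyToK : Polynomial Fq →+* K Fq := Polynomial.eval₂RingHom HahnSeries.C (TT Fq)

open Classical in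
/-- The absolute value on `F_q((T⁻¹))`: `|0| = 0` and `|ξ| = q^{-N}` where `N` is the order
of `ξ` as a series in `T⁻¹`. -/
def kabs (f : K Fq) : ℝ := if f = 0 then 0 else (Fintype.card Fq : ℝ) ^ (-f.order)

/-- A fixed algebraic closure of `F_q((T⁻¹))`. -/
abbrev L := AlgebraicClosure (K Fq)

def toL : K Fq →+* L Fq := algebraMap (K Fq) (L Fq)

def φ : Polynomial Fq →+* L Fq := (toL Fq).comp (polyToK Fq)

/-- Evaluation of `P ∈ (F_q[T])[X]` at `ξ ∈ F_q((T⁻¹))`. -/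
def evalK (P : Polynomial (Polynomial Fq)) (ξ : K Fq) : K Fq :=
  Polynomial.eval₂ (polyToK Fq) ξ P

/-- Evaluation of `P ∈ (F_q[T])[X]` at a point of the algebraic closure. -/
def evalL (P : Polynomial (Polynomial Fq)) (α : L Fq) : L Fq :=
  Polynomial.eval₂ (φ Fq) α P

/-- Height of a polynomial over `F_q[T]`: the maximum of the absolute values of its
coefficients. -/
def Hpoly (P : Polynomial (Polynomial Fq)) : ℝ := ⨆ i : ℕ, kabs Fq (polyToK Fq (P.coeff i))

/-- `P` is the minimal polynomial of `α`: a non-constant irreducible primitive polynomial in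
`(F_q[T])[X]` whose leading coefficient is monic in `T`, vanishing at `α`. -/
def IsMinPolyOf (P : Polynomial (Polynomial Fq)) (α : L Fq) : Prop :=
  0 < P.natDegree ∧ Irreducible P ∧ P.IsPrimitive ∧ (P.leadingCoeff).Monic ∧ evalL Fq P α = 0

/-- `α` is algebraic over `F_q(T)`. -/
def IsAlgElem (α : L Fq) : Prop := ∃ P, IsMinPolyOf Fq P α

open Classical in
/-- The minimal polynomial of an algebraic element (junk value `0` otherwise). -/
def minPolyPrim (α : L Fq) : Polynomial (Polynomial Fq) :=
  if h : IsAlgElem Fq α then h.choose else 0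

/-- Degree of an algebraic element. -/
def degAlg (α : L Fq) : ℕ := (minPolyPrim Fq α).natDegree

/-- Height of an algebraic element. -/
def heightAlg (α : L Fq) : ℝ := Hpoly Fq (minPolyPrim Fq α)

/-- Inseparable degree of a polynomial `P ∈ (F_q[T])[X]`: the largest power `f = p^j` of the
characteristic such that `P(X) = R(X^f)` for some `R`. -/
def insepDeg (P : Polynomial (Polynomial Fq)) : ℕ :=
  (ringChar Fq) ^ sSup {j : ℕ | ∃ R : Polynomial (Polynomial Fq),
    P = R.comp (Polynomial.X ^ (ringChar Fq) ^ j)}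

/-- Inseparable degree of an algebraic element. -/
def insepAlg (α : L Fq) : ℕ := insepDeg Fq (minPolyPrim Fq α)

/-- `α'` is the Galois conjugate of the quadratic element `α` (equal to `α` itself in the
inseparable case): the minimal polynomial of `α` factors as `A(X - α)(X - α')`. -/
def IsConjOf (α' α : L Fq) : Prop :=
  (minPolyPrim Fq α).natDegree = 2 ∧
  (minPolyPrim Fq α).map (φ Fq) =
    Polynomial.C (φ Fq (minPolyPrim Fq α).leadingCoeff) *
      (Polynomial.X - Polynomial.C α) * (Polynomial.X - Polynomial.C α')

/-- `v` is an absolute value on the algebraic closure of `F_q((T⁻¹))` extending `kabs`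
(such an extension exists and is unique). -/
structure IsAbsExt (v : L Fq → ℝ) : Prop where
  eq_zero_iff : ∀ x, v x = 0 ↔ x = 0
  map_mul : ∀ x y, v (x * y) = v x * v y
  add_le : ∀ x y, v (x + y) ≤ max (v x) (v y)
  nonneg : ∀ x, 0 ≤ v x
  extends_kabs : ∀ f : K Fq, v (toL Fq f) = kabs Fq f

/-- The exponent `w_n(ξ)`: the supremum of the real numbers `w` such that
`0 < |P(ξ)| ≤ H(P)^{-w}` for infinitely many `P ∈ (F_q[T])[X]` of degree at most `n`. -/
def wExp (n : ℕ) (ξ : K Fq) : EReal :=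
  sSup {x : EReal | ∃ w : ℝ, x = (w : EReal) ∧
    {P : Polynomial (Polynomial Fq) | P.natDegree ≤ n ∧ 0 < kabs Fq (evalK Fq P ξ) ∧
      kabs Fq (evalK Fq P ξ) ≤ Hpoly Fq P ^ (-w)}.Infinite}

/-- The exponent `w_n^*(ξ)`: the supremum of the real numbers `w` such that
`0 < |ξ - α| ≤ H(α)^{-w-1}` for infinitely many algebraic `α` of degree at most `n`. -/
def wStarExp (v : L Fq → ℝ) (n : ℕ) (ξ : K Fq) : EReal :=
  sSup {x : EReal | ∃ w : ℝ, x = (w : EReal) ∧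
    {α : L Fq | IsAlgElem Fq α ∧ degAlg Fq α ≤ n ∧ 0 < v (toL Fq ξ - α) ∧
      v (toL Fq ξ - α) ≤ heightAlg Fq α ^ (-w - 1)}.Infinite}

/-- `pSeq a n = p_{n-1}`, the numerators of the convergents of `[a 0; a 1, a 2, …]`
(with `p_{-1} = 1`). -/
def pSeq (a : ℕ → Polynomial Fq) : ℕ → Polynomial Fq
  | 0 => 1
  | 1 => a 0
  | (n+2) => a (n+1) * pSeq a (n+1) + pSeq a n

/-- `qSeq a n = q_{n-1}`, the denominators of the convergents of `[a 0; a 1, a 2, …]`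
(with `q_{-1} = 0`). -/
def qSeq (a : ℕ → Polynomial Fq) : ℕ → Polynomial Fq
  | 0 => 0
  | 1 => 1
  | (n+2) => a (n+1) * qSeq a (n+1) + qSeq a n

/-- `ξ` has continued fraction expansion `[a 0; a 1, a 2, …]`: each partial quotient `a n`
(`n ≥ 1`) has degree at least one and `|ξ - p_n/q_n| = |q_n|⁻¹|q_{n+1}|⁻¹` for all `n ≥ 0`. -/
def IsCFOf (ξ : K Fq) (a : ℕ → Polynomial Fq) : Prop :=
  (∀ n, 1 ≤ n → 1 ≤ (a n).natDegree) ∧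
  ∀ n : ℕ,
    kabs Fq (ξ - polyToK Fq (pSeq Fq a (n+1)) / polyToK Fq (qSeq Fq a (n+1))) =
      (kabs Fq (polyToK Fq (qSeq Fq a (n+1))) * kabs Fq (polyToK Fq (qSeq Fq a (n+2))))⁻¹

/-- The sequence of partial quotients of `[0; b 0, b 1, b 2, …]`. -/
def cfA (b : ℕ → Polynomial Fq) : ℕ → Polynomial Fq := fun n => if n = 0 then 0 else b (n - 1)

/-- `qden b n` is the denominator `q_n` of the `n`-th convergent of `[0; b 0, b 1, …]`. -/
def qden (b : ℕ → Polynomial Fq) (n : ℕ) : Polynomial Fq := qSeq Fq (cfA Fq b) (n + 1)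

/-- `V^w` for a finite word `V` and a real `w ≥ 0`: `⌊w⌋` copies of `V` followed by the prefix
of `V` of length `⌈(w - ⌊w⌋)|V|⌉`. -/
def wordPow {A : Type*} (V : List A) (w : ℝ) : List A :=
  (List.replicate ⌊w⌋₊ V).flatten ++ V.take ⌈(w - ⌊w⌋₊) * V.length⌉₊

/-- The finite word `l` is a prefix of the infinite word `b`. -/
def IsPrefixOfSeq {A : Type*} (l : List A) (b : ℕ → A) : Prop :=
  ∀ (i : ℕ) (h : i < l.length), l.get ⟨i, h⟩ = b i

/-- Condition `(*)_ρ` for an infinite word. -/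
def SatisfiesCond {A : Type*} (b : ℕ → A) (ρ : ℝ) : Prop :=
  ∃ (U V : ℕ → List A) (w : ℕ → ℝ),
    (∀ n, V n ≠ []) ∧ (∀ n, 0 ≤ w n) ∧
    (∀ n, IsPrefixOfSeq (U n ++ wordPow (V n) (w n)) b) ∧
    (∀ n, ρ * (((U n).length + (V n).length : ℕ) : ℝ) ≤
      (((U n).length + (wordPow (V n) (w n)).length : ℕ) : ℝ)) ∧
    StrictMono fun n => (wordPow (V n) (w n)).length

/-- The Diophantine exponent of an infinite word: the supremum of the `ρ` such that the word
satisfies Condition `(*)_ρ`. -/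
def dioExp {A : Type*} (b : ℕ → A) : EReal :=
  sSup {x : EReal | ∃ ρ : ℝ, x = (ρ : EReal) ∧ SatisfiesCond b ρ}

/-- The complexity function: the number of distinct blocks of `n` consecutive letters. -/
def complexity {A : Type*} (b : ℕ → A) (n : ℕ) : ℕ∞ :=
  {w : Fin n → A | ∃ i : ℕ, ∀ k : Fin n, w k = b (i + k)}.encard

/-- The infinite word `b` is ultimately periodic. -/
def UltimatelyPeriodic {A : Type*} (b : ℕ → A) : Prop :=
  ∃ N T : ℕ, 0 < T ∧ ∀ n, N ≤ n → b (n + T) = b n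

/-! The continued fraction `ξ = [0, a_1, a_2, …]` with `a_{i+m} = a_i` for `i > n` satisfies a
quadratic equation. In terms of the linear forms `L k = q_{k-1} X - p_{k-1}` it reads
`L n * L (n + m + 1) - L (n + 1) * L (n + m) = 0`: by periodicity the left-hand side is, up to
sign, unchanged when `n` increases, while `L k` tends to zero at `ξ`. Since `a_n ≠ a_{n+m}`, its
leading coefficient is as large as `q_n q_{n+m}` up to a constant factor, and no coefficient is
larger than that. The minimal polynomial is obtained by dividing out the content. The change of
variables with matrix `(q_{n-1}, p_{n-1}; q_n, p_n)` is unimodular, so the content divides every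
coefficient of the quadratic equation of the purely periodic tail `[a_{n+1}, a_{n+2}, …]`, and for
the period `b, …, b, d` it therefore divides `d - b`. -/

section LaurentAbsoluteValue

variable (F : Type) [Field F]

lemma polyToK_monomial (n : ℕ) (r : F) :
    polyToK F (monomial n r) = HahnSeries.single (-n : ℤ) r := by
  simp only [polyToK, TT, coe_eval₂RingHom, eval₂_monomial, HahnSeries.single_pow,
    HahnSeries.C_apply, HahnSeries.single_mul_single]
  simp

lemma coeff_polyToK (f : F[X]) (z : ℤ) :
    (polyToK F f).coeff z = if z ≤ 0 then f.coeff (-z).toNat else 0 := by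
  induction f using Polynomial.induction_on' with
  | add f g hf hg =>
    rw [map_add, HahnSeries.coeff_add, hf, hg, coeff_add]
    split_ifs <;> simp
  | monomial n r =>
    rw [polyToK_monomial, HahnSeries.coeff_single, coeff_monomial]
    split_ifs <;> first | rfl | lia

lemma polyToK_injective : Function.Injective (polyToK F) := fun f g h ↦ by
  ext i
  simpa [coeff_polyToK] using congrArg (HahnSeries.coeff · (-i : ℤ)) h

lemma order_polyToK {f : F[X]} (hf : f ≠ 0) : (polyToK F f).order = -f.natDegree := by
  apply le_antisymm
  · apply HahnSeries.order_le_of_coeff_ne_zero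
    simpa [coeff_polyToK] using hf
  · have h := HahnSeries.coeff_order_eq_zero.not.2
      ((map_ne_zero_iff _ (polyToK_injective F)).2 hf)
    rw [coeff_polyToK] at h
    split_ifs at h
    · have := le_natDegree_of_ne_zero h
      lia
    · exact absurd rfl h

variable [Fintype F]

lemma one_lt_card : (1 : ℝ) < Fintype.card F := by
  exact_mod_cast Fintype.one_lt_card

lemma kabs_of_ne_zero {x : K F} (hx : x ≠ 0) :
    kabs F x = (Fintype.card F : ℝ) ^ (-x.order) := if_neg hx

lemma kabs_nonneg (x : K F) : 0 ≤ kabs F x := by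
  unfold kabs
  positivity

lemma isNonarchimedean_kabs : IsNonarchimedean (kabs F) := fun x y ↦ by
  by_cases hxy : x + y = 0
  · exact le_max_of_le_left (by simpa [kabs, hxy] using kabs_nonneg F x)
  by_cases hx : x = 0
  · simp [hx]
  by_cases hy : y = 0
  · simp [hy]
  have h := HahnSeries.min_order_le_order_add hxy
  rw [kabs_of_ne_zero F hx, kabs_of_ne_zero F hy, kabs_of_ne_zero F hxy,
    ← (zpow_right_mono₀ (one_lt_card F).le).map_max]
  exact zpow_le_zpow_right₀ (one_lt_card F).le (by lia)

/-- The absolute value `kabs` on `F_q((T⁻¹))` as a bundled `AbsoluteValue`. -/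
def kAbv : AbsoluteValue (K F) ℝ where
  toFun := kabs F
  map_mul' x y := by
    by_cases hx : x = 0
    · simp [kabs, hx]
    by_cases hy : y = 0
    · simp [kabs, hy]
    rw [kabs_of_ne_zero F hx, kabs_of_ne_zero F hy, kabs_of_ne_zero F (mul_ne_zero hx hy),
      HahnSeries.order_mul hx hy, neg_add, zpow_add₀ (one_pos.trans (one_lt_card F)).ne']
  nonneg' := kabs_nonneg F
  eq_zero' x := by
    by_cases hx : x = 0
    · simp [kabs, hx]
    · simpa [hx, kabs_of_ne_zero F hx] using zpow_ne_zero _ (one_pos.trans (one_lt_card F)).ne'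
  add_le' _ _ := (isNonarchimedean_kabs F).add_le (kabs_nonneg F)

/-- The absolute value on `F_q[T]` induced by that of `F_q((T⁻¹))`. -/
def polyAbv : AbsoluteValue F[X] ℝ := (kAbv F).comp (polyToK_injective F)

lemma kAbv_polyToK (f : F[X]) : kAbv F (polyToK F f) = polyAbv F f := rfl

lemma isNonarchimedean_polyAbv : IsNonarchimedean (polyAbv F) := fun f g ↦ by
  change kabs F (polyToK F (f + g)) ≤ _
  rw [map_add]
  exact isNonarchimedean_kabs F _ _

variable {F}

lemma polyAbv_of_ne_zero {f : F[X]} (hf : f ≠ 0) :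
    polyAbv F f = (Fintype.card F : ℝ) ^ f.natDegree := by
  change kabs F (polyToK F f) = _
  rw [kabs_of_ne_zero F ((map_ne_zero_iff _ (polyToK_injective F)).2 hf), order_polyToK F hf,
    neg_neg, zpow_natCast]

lemma one_le_polyAbv {f : F[X]} (hf : f ≠ 0) : 1 ≤ polyAbv F f := by
  rw [polyAbv_of_ne_zero hf]
  exact one_le_pow₀ (one_lt_card F).le

lemma two_le_polyAbv {f : F[X]} (hf : 1 ≤ f.natDegree) : 2 ≤ polyAbv F f := by
  rw [polyAbv_of_ne_zero (ne_zero_of_natDegree_gt hf)]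
  calc (2 : ℝ) ≤ Fintype.card F := by exact_mod_cast Fintype.one_lt_card
    _ ≤ (Fintype.card F : ℝ) ^ f.natDegree := le_self_pow₀ (one_lt_card F).le (by lia)

lemma polyAbv_mul_add_of_lt {f g h : F[X]} (hf : 1 ≤ f.natDegree)
    (hgh : polyAbv F h < polyAbv F g) :
    polyAbv F (f * g + h) = polyAbv F f * polyAbv F g := by
  have hlt : polyAbv F h < polyAbv F (f * g) := by
    rw [map_mul]
    nlinarith [two_le_polyAbv hf, (polyAbv F).nonneg h]
  rw [(isNonarchimedean_polyAbv F).add_eq_left_of_lt hlt, map_mul]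

lemma polyAbv_le_of_dvd {f g : F[X]} (hg : g ≠ 0) (h : f ∣ g) : polyAbv F f ≤ polyAbv F g := by
  obtain ⟨k, rfl⟩ := h
  rw [map_mul]
  exact le_mul_of_one_le_right ((polyAbv F).nonneg f)
    (one_le_polyAbv (right_ne_zero_of_mul hg))

end LaurentAbsoluteValue

section Height

variable {F : Type} [Field F] [Fintype F]

lemma Hpoly_eq_gaussNorm (P : F[X][X]) : Hpoly F P = P.gaussNorm (polyAbv F) 1 := by
  have h_le : ∀ i, kabs F (polyToK F (P.coeff i)) ≤ P.gaussNorm (polyAbv F) 1 := fun i ↦ by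
    simpa using! P.le_gaussNorm (polyAbv F) zero_le_one i
  apply le_antisymm (ciSup_le h_le)
  obtain ⟨i, hi⟩ := P.exists_eq_gaussNorm (polyAbv F) 1
  rw [hi, one_pow, mul_one]
  exact le_ciSup (f := fun i ↦ kabs F (polyToK F (P.coeff i)))
    ⟨_, Set.forall_mem_range.2 h_le⟩ i

lemma polyAbv_coeff_le_Hpoly (P : F[X][X]) (i : ℕ) : polyAbv F (P.coeff i) ≤ Hpoly F P := by
  simpa [Hpoly_eq_gaussNorm] using P.le_gaussNorm (polyAbv F) zero_le_one i

lemma Hpoly_mul (P Q : F[X][X]) : Hpoly F (P * Q) = Hpoly F P * Hpoly F Q := by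
  simp only [Hpoly_eq_gaussNorm]
  exact gaussNorm_mul (isNonarchimedean_polyAbv F) one_pos P Q

lemma Hpoly_C (f : F[X]) : Hpoly F (C f) = polyAbv F f := by
  rw [Hpoly_eq_gaussNorm, gaussNorm_C]

lemma Hpoly_C_mul_X (f : F[X]) : Hpoly F (C f * X) = polyAbv F f := by
  rw [Hpoly_eq_gaussNorm, C_mul_X_eq_monomial, gaussNorm_monomial, one_pow, mul_one]

lemma Hpoly_neg (P : F[X][X]) : Hpoly F (-P) = Hpoly F P :=
  iSup_congr fun i ↦ by
    rw [coeff_neg]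
    exact (polyAbv F).map_neg _

lemma Hpoly_sub_le (P Q : F[X][X]) : Hpoly F (P - Q) ≤ max (Hpoly F P) (Hpoly F Q) := by
  rw [sub_eq_add_neg, ← Hpoly_neg Q]
  simp only [Hpoly_eq_gaussNorm]
  exact isNonarchimedean_gaussNorm _ (isNonarchimedean_polyAbv F) zero_le_one _ _

end Height

section MinimalPolynomial

lemma dvd_of_eval₂_eq_zero {R L : Type*} [CommRing R] [IsDomain R] [IsGCDMonoid R] [Field L]
    {f : R →+* L} (hf : Function.Injective f) {x : L} {P Q : R[X]} (hQ : Irreducible Q)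
    (hQ_prim : Q.IsPrimitive) (hQx : Q.eval₂ f x = 0) (hPx : P.eval₂ f x = 0) : Q ∣ P := by
  let ψ : FractionRing R →+* L := IsFractionRing.lift hf
  have hψ (S : R[X]) : (S.map (algebraMap R (FractionRing R))).eval₂ ψ x = S.eval₂ f x := by
    rw [eval₂_map]
    congr 1
    exact RingHom.ext (IsFractionRing.lift_algebraMap hf)
  apply hQ_prim.dvd_of_fraction_map_dvd_fraction_map (K := FractionRing R)
  by_contra hndvd
  obtain ⟨u, v, huv⟩ := (hQ_prim.irreducible_iff_irreducible_map_fraction_map.1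
    hQ).coprime_iff_not_dvd.2 hndvd
  simpa [eval₂_add, eval₂_mul, hψ, hQx, hPx] using congrArg (eval₂ ψ x) huv

variable {F : Type} [Field F] {ξ : K F} {P Q : F[X][X]}

lemma evalL_toL_eq_zero_iff : evalL F P (toL F ξ) = 0 ↔ evalK F P ξ = 0 := by
  rw [evalL, φ, ← hom_eval₂, map_eq_zero_iff _ (toL F).injective]
  rfl

lemma exists_irreducible_evalK_eq_zero (hP : P ≠ 0) (h : evalK F P ξ = 0) :
    ∃ Q, Irreducible Q ∧ evalK F Q ξ = 0 := by
  let I := RingHom.ker (eval₂RingHom (polyToK F) ξ)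
  have hI : I ≠ ⊥ := fun hI ↦ hP (hI.le h)
  obtain ⟨Q, hQI, hQ⟩ := (RingHom.ker_isPrime _).exists_mem_prime_of_ne_bot hI
  exact ⟨Q, hQ.irreducible, hQI⟩

lemma isAlgElem_toL (hP : P ≠ 0) (h : evalK F P ξ = 0) : IsAlgElem F (toL F ξ) := by
  obtain ⟨Q, hQ, hQξ⟩ := exists_irreducible_evalK_eq_zero hP h
  have hQ_deg : Q.natDegree ≠ 0 := fun hQ_deg ↦ by
    obtain ⟨r, rfl⟩ := natDegree_eq_zero.1 hQ_deg
    rw [evalK, eval₂_C, map_eq_zero_iff _ (polyToK_injective F)] at hQξ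
    exact hQ.ne_zero (by rw [hQξ, C_0])
  have hlead : Q.leadingCoeff.leadingCoeff ≠ 0 := by simpa using hQ.ne_zero
  have hunit : IsUnit (C (C Q.leadingCoeff.leadingCoeff⁻¹) : F[X][X]) :=
    ((inv_ne_zero hlead).isUnit.map C).map C
  have hirr := (irreducible_isUnit_mul hunit).2 hQ
  have hdeg := natDegree_C_mul (p := Q) (C_ne_zero.2 (inv_ne_zero hlead))
  refine ⟨_, ?_, hirr, hirr.isPrimitive ?_, ?_, ?_⟩
  · rwa [hdeg, Nat.pos_iff_ne_zero]
  · rwa [hdeg]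
  · rw [leadingCoeff_mul, leadingCoeff_C, Monic, leadingCoeff_mul, leadingCoeff_C,
      inv_mul_cancel₀ hlead]
  · rw [evalL_toL_eq_zero_iff, evalK, eval₂_mul, ← evalK, ← evalK, hQξ, mul_zero]

lemma IsAlgElem.isMinPolyOf_minPolyPrim {α : L F} (h : IsAlgElem F α) :
    IsMinPolyOf F (minPolyPrim F α) α := by
  rw [minPolyPrim, dif_pos h]
  exact h.choose_spec

lemma IsMinPolyOf.natDegree_eq_two (hQ : IsMinPolyOf F Q (toL F ξ))
    (hξ : ∀ r s : F[X], s ≠ 0 → polyToK F s * ξ + polyToK F r ≠ 0)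
    (hP : P ≠ 0) (hP_deg : P.natDegree ≤ 2) (h : evalK F P ξ = 0) :
    Q.natDegree = 2 ∧ ∃ g ≠ 0, P = C g * Q := by
  obtain ⟨hQ_pos, hQ_irr, hQ_prim, -, hQξ⟩ := hQ
  rw [evalL_toL_eq_zero_iff] at hQξ
  obtain ⟨R, rfl⟩ := dvd_of_eval₂_eq_zero (polyToK_injective F) hQ_irr hQ_prim hQξ h
  have hR : R ≠ 0 := right_ne_zero_of_mul hP
  rw [natDegree_mul hQ_irr.ne_zero hR] at hP_deg
  have hQ_ne_one : Q.natDegree ≠ 1 := fun hQ_one ↦ by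
    have hcoeff : Q.coeff 1 ≠ 0 := hQ_one ▸ leadingCoeff_ne_zero.2 hQ_irr.ne_zero
    rw [Q.eq_X_add_C_of_natDegree_le_one hQ_one.le] at hQξ
    exact hξ _ _ hcoeff (by simpa [evalK] using hQξ)
  obtain ⟨g, rfl⟩ := natDegree_eq_zero.1 (show R.natDegree = 0 by lia)
  exact ⟨by lia, g, C_ne_zero.1 hR, mul_comm _ _⟩

end MinimalPolynomial

section Continuant

/-- `x` satisfies the recurrence of the convergents of the continued fraction with partial
quotients `a`, indexed as in `pSeq` and `qSeq`. -/
def IsContinuantSeq {R : Type*} [CommRing R] (a x : ℕ → R) : Prop :=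
  ∀ k, x (k + 2) = a (k + 1) * x (k + 1) + x k

namespace IsContinuantSeq

variable {R S : Type*} [CommRing R] [CommRing S] {a b x y : ℕ → R}

lemma map (f : R →+* S) (hx : IsContinuantSeq a x) :
    IsContinuantSeq (fun k ↦ f (a k)) fun k ↦ f (x k) := fun k ↦ by
  simp only [hx k, map_add, map_mul]

lemma shift (hx : IsContinuantSeq a x) (n : ℕ) :
    IsContinuantSeq (fun k ↦ a (n + k)) fun k ↦ x (n + k) := fun k ↦ hx (n + k)

lemma congr (hx : IsContinuantSeq a x) (h : ∀ k, a (k + 1) = b (k + 1)) :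
    IsContinuantSeq b x := fun k ↦ h k ▸ hx k

lemma casoratian (hx : IsContinuantSeq a x) (hy : IsContinuantSeq a y) (k : ℕ) :
    x (k + 1) * y k - x k * y (k + 1) = (-1) ^ k * (x 1 * y 0 - x 0 * y 1) := by
  induction k with
  | zero => ring
  | succ k ih =>
    rw [hx k, hy k]
    linear_combination -ih

lemma casoratian_eq_zero (hx : IsContinuantSeq a x) (hy : IsContinuantSeq a y)
    (v : AbsoluteValue R ℝ) (hvx : Tendsto (fun k ↦ v (x k)) atTop (nhds 0))
    (hvy : Tendsto (fun k ↦ v (y k)) atTop (nhds 0)) : x 1 * y 0 - x 0 * y 1 = 0 := by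
  have hvx' := (tendsto_add_atTop_iff_nat 1).2 hvx
  have hvy' := (tendsto_add_atTop_iff_nat 1).2 hvy
  have hlim := (hvx'.mul hvy).add (hvx.mul hvy')
  rw [mul_zero, add_zero] at hlim
  have hle (k : ℕ) :
      v (x 1 * y 0 - x 0 * y 1) ≤ v (x (k + 1)) * v (y k) + v (x k) * v (y (k + 1)) := by
    calc v (x 1 * y 0 - x 0 * y 1) = v (x (k + 1) * y k - x k * y (k + 1)) := by
          rw [hx.casoratian hy k]
          rcases neg_one_pow_eq_or R k with h | h <;>
            simp [h, v.map_sub]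
      _ ≤ v (x (k + 1) * y k) + v (x k * y (k + 1)) := v.sub_le_add _ _
      _ = _ := by rw [map_mul, map_mul]
  exact v.eq_zero.1 ((ge_of_tendsto' hlim hle).antisymm (v.nonneg _))

end IsContinuantSeq

variable {F : Type} [Field F]

lemma isContinuantSeq_pSeq (a : ℕ → F[X]) : IsContinuantSeq a (pSeq F a) := fun _ ↦ rfl

lemma isContinuantSeq_qSeq (a : ℕ → F[X]) : IsContinuantSeq a (qSeq F a) := fun _ ↦ rfl

lemma IsContinuantSeq.eq_pSeq_mul_add_qSeq_mul {a x : ℕ → F[X]} (hx : IsContinuantSeq a x)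
    (n k : ℕ) : x (n + 1 + k) =
      pSeq F (fun i ↦ a (n + 1 + i)) k * x (n + 1) + qSeq F (fun i ↦ a (n + 1 + i)) k * x n := by
  induction k using Nat.twoStepInduction with
  | zero => simp [pSeq, qSeq]
  | one => simpa [pSeq, qSeq] using hx n
  | more k ih₀ ih₁ =>
    have hrec : x (n + 1 + (k + 2)) = a (n + 1 + (k + 1)) * x (n + 1 + (k + 1)) + x (n + 1 + k) :=
      hx (n + 1 + k)
    rw [hrec, ih₀, ih₁, isContinuantSeq_pSeq _ k, isContinuantSeq_qSeq _ k]
    ring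

lemma pSeq_mul_qSeq_sub_sq (a : ℕ → F[X]) (k : ℕ) :
    (pSeq F a (k + 1) * qSeq F a k - pSeq F a k * qSeq F a (k + 1)) ^ 2 = 1 := by
  rw [(isContinuantSeq_pSeq a).casoratian (isContinuantSeq_qSeq a) k, mul_pow,
    ← pow_mul, mul_comm k, pow_mul]
  simp [pSeq, qSeq]

lemma isCoprime_qSeq_succ (a : ℕ → F[X]) (k : ℕ) : IsCoprime (qSeq F a (k + 1)) (qSeq F a k) := by
  let δ := pSeq F a (k + 1) * qSeq F a k - pSeq F a k * qSeq F a (k + 1)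
  exact ⟨-δ * pSeq F a k, δ * pSeq F a (k + 1), by
    linear_combination pSeq_mul_qSeq_sub_sq a k⟩

lemma qSeq_eq_qSeq_const {a : ℕ → F[X]} {b : F[X]} {k : ℕ} (h : ∀ i, i + 1 < k → a (i + 1) = b) :
    qSeq F a k = qSeq F (fun _ ↦ b) k := by
  induction k using Nat.twoStepInduction with
  | zero => rfl
  | one => rfl
  | more k ih₀ ih₁ =>
    rw [qSeq, qSeq, ih₀ fun i hi ↦ h i (by lia), ih₁ fun i hi ↦ h i (by lia), h k (by lia)]

lemma pSeq_eq_qSeq_const {a : ℕ → F[X]} {b : F[X]} {k : ℕ} (h : ∀ i < k, a i = b) :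
    pSeq F a k = qSeq F (fun _ ↦ b) (k + 1) := by
  induction k using Nat.twoStepInduction with
  | zero => rfl
  | one => simp [pSeq, qSeq, h 0 one_pos]
  | more k ih₀ ih₁ =>
    rw [pSeq, qSeq, ih₀ fun i hi ↦ h i (by lia), ih₁ fun i hi ↦ h i (by lia), h (k + 1) (by lia)]

lemma dvd_sub_of_dvd_pSeq_of_dvd_qSeq {b d g : F[X]} {m : ℕ} {a : ℕ → F[X]}
    (hb : ∀ i < m, a i = b) (hd : a m = d) (hm : 1 ≤ m)
    (hp : g ∣ pSeq F a m) (hq : g ∣ qSeq F a (m + 1)) : g ∣ d - b := by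
  obtain ⟨k, rfl⟩ := Nat.exists_eq_add_of_le' hm
  rw [pSeq_eq_qSeq_const hb] at hp
  have hdiff : qSeq F a (k + 2) - qSeq F (fun _ ↦ b) (k + 2) =
      (d - b) * qSeq F (fun _ ↦ b) (k + 1) := by
    rw [isContinuantSeq_qSeq a k, isContinuantSeq_qSeq _ k, hd,
      qSeq_eq_qSeq_const (k := k) fun i _ ↦ hb _ (by lia),
      qSeq_eq_qSeq_const (k := k + 1) fun i _ ↦ hb _ (by lia)]
    ring
  exact ((isCoprime_qSeq_succ _ (k + 1)).of_isCoprime_of_dvd_left hp).dvd_of_dvd_mul_right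
    (hdiff ▸ dvd_sub hq hp)

end Continuant

section PeriodPolynomial

variable {F : Type} [Field F]

/-- The linear form `q_{k-1} X - p_{k-1}` attached to a convergent. -/
def convForm (a : ℕ → F[X]) (k : ℕ) : F[X][X] := C (qSeq F a k) * X - C (pSeq F a k)

/-- The quadratic polynomial which has `[a_0, a_1, …]` as a root when `a_{i+m} = a_i` for all
`i > n`. -/
def periodPoly (a : ℕ → F[X]) (n m : ℕ) : F[X][X] :=
  convForm a n * convForm a (n + m + 1) - convForm a (n + 1) * convForm a (n + m)

lemma evalK_convForm (a : ℕ → F[X]) (k : ℕ) (ξ : K F) : evalK F (convForm a k) ξ =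
    polyToK F (qSeq F a k) * ξ - polyToK F (pSeq F a k) := by
  simp [evalK, convForm, eval₂_sub]

lemma isContinuantSeq_convForm (a : ℕ → F[X]) :
    IsContinuantSeq (fun k ↦ C (a k)) (convForm a) := fun k ↦ by
  simp only [convForm, qSeq, pSeq, C_add, C_mul]
  ring

lemma isContinuantSeq_evalK_convForm (a : ℕ → F[X]) (ξ : K F) :
    IsContinuantSeq (fun k ↦ polyToK F (a k)) fun k ↦ evalK F (convForm a k) ξ := by
  simpa [evalK] using (isContinuantSeq_convForm a).map (eval₂RingHom (polyToK F) ξ)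

lemma periodPoly_eq_quadratic (a : ℕ → F[X]) (n m : ℕ) : periodPoly a n m =
    C (qSeq F a n * qSeq F a (n + m + 1) - qSeq F a (n + 1) * qSeq F a (n + m)) * X ^ 2 +
    C (qSeq F a (n + 1) * pSeq F a (n + m) + pSeq F a (n + 1) * qSeq F a (n + m) -
      qSeq F a n * pSeq F a (n + m + 1) - pSeq F a n * qSeq F a (n + m + 1)) * X +
    C (pSeq F a n * pSeq F a (n + m + 1) - pSeq F a (n + 1) * pSeq F a (n + m)) := by
  simp only [periodPoly, convForm, C_add, C_sub, C_mul]
  ring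

lemma natDegree_periodPoly_le (a : ℕ → F[X]) (n m : ℕ) : (periodPoly a n m).natDegree ≤ 2 := by
  rw [periodPoly_eq_quadratic]
  exact natDegree_quadratic_le

lemma coeff_two_periodPoly (a : ℕ → F[X]) (n m : ℕ) : (periodPoly a n m).coeff 2 =
    qSeq F a n * qSeq F a (n + m + 1) - qSeq F a (n + 1) * qSeq F a (n + m) := by
  simp [periodPoly_eq_quadratic, -map_sub, -map_mul]

lemma coeff_one_periodPoly (a : ℕ → F[X]) (n m : ℕ) : (periodPoly a n m).coeff 1 =
    qSeq F a (n + 1) * pSeq F a (n + m) + pSeq F a (n + 1) * qSeq F a (n + m) -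
      qSeq F a n * pSeq F a (n + m + 1) - pSeq F a n * qSeq F a (n + m + 1) := by
  simp [periodPoly_eq_quadratic, coeff_C, -map_sub, -map_mul]

lemma coeff_zero_periodPoly (a : ℕ → F[X]) (n m : ℕ) : (periodPoly a n m).coeff 0 =
    pSeq F a n * pSeq F a (n + m + 1) - pSeq F a (n + 1) * pSeq F a (n + m) := by
  simp [periodPoly_eq_quadratic, -map_sub, -map_mul]

lemma dvd_of_C_dvd_periodPoly {a : ℕ → F[X]} {n m : ℕ} {g : F[X]}
    (h : C g ∣ periodPoly a n (m + 1)) :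
    g ∣ pSeq F (fun i ↦ a (n + 1 + i)) m ∧ g ∣ qSeq F (fun i ↦ a (n + 1 + i)) (m + 1) := by
  rw [C_dvd_iff_dvd_coeff] at h
  have h_dvd (s t : F[X]) : g ∣ (periodPoly a n (m + 1)).coeff 2 * s ^ 2 +
      (periodPoly a n (m + 1)).coeff 1 * (s * t) + (periodPoly a n (m + 1)).coeff 0 * t ^ 2 :=
    (((h 2).mul_right _).add ((h 1).mul_right _)).add ((h 0).mul_right _)
  have hp (k : ℕ) := (isContinuantSeq_pSeq a).eq_pSeq_mul_add_qSeq_mul n k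
  have hq (k : ℕ) := (isContinuantSeq_qSeq a).eq_pSeq_mul_add_qSeq_mul n k
  have hdet := pSeq_mul_qSeq_sub_sq a n
  simp only [coeff_two_periodPoly, coeff_one_periodPoly, coeff_zero_periodPoly,
    show n + (m + 1) = n + 1 + m by lia, add_assoc _ m 1, hp, hq] at h_dvd
  -- The binary quadratic form is evaluated at the two convergents where `convForm` vanishes.
  constructor
  · rw [← dvd_neg]
    refine (h_dvd (pSeq F a n) (qSeq F a n)).trans (dvd_of_eq ?_)
    linear_combination (-pSeq F (fun i ↦ a (n + 1 + i)) m) * hdet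
  · refine (h_dvd (pSeq F a (n + 1)) (qSeq F a (n + 1))).trans (dvd_of_eq ?_)
    linear_combination (qSeq F (fun i ↦ a (n + 1 + i)) (m + 1)) * hdet

end PeriodPolynomial

section ContinuantSize

variable {F : Type} [Field F] [Fintype F] {a : ℕ → F[X]}

lemma polyAbv_qSeq_lt_succ (ha : ∀ k, 1 ≤ k → 1 ≤ (a k).natDegree) (k : ℕ) :
    polyAbv F (qSeq F a k) < polyAbv F (qSeq F a (k + 1)) := by
  induction k with
  | zero => simp [qSeq]
  | succ k ih =>
    rw [isContinuantSeq_qSeq a k, polyAbv_mul_add_of_lt (ha (k + 1) (by lia)) ih]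
    nlinarith [two_le_polyAbv (ha (k + 1) (by lia)), (polyAbv F).nonneg (qSeq F a k)]

lemma strictMono_polyAbv_qSeq (ha : ∀ k, 1 ≤ k → 1 ≤ (a k).natDegree) :
    StrictMono fun k ↦ polyAbv F (qSeq F a k) :=
  strictMono_nat_of_lt_succ (polyAbv_qSeq_lt_succ ha)

lemma polyAbv_qSeq_add_two (ha : ∀ k, 1 ≤ k → 1 ≤ (a k).natDegree) (k : ℕ) :
    polyAbv F (qSeq F a (k + 2)) = polyAbv F (a (k + 1)) * polyAbv F (qSeq F a (k + 1)) := by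
  rw [isContinuantSeq_qSeq a k,
    polyAbv_mul_add_of_lt (ha (k + 1) (by lia)) (polyAbv_qSeq_lt_succ ha k)]

lemma polyAbv_qSeq_succ_pos (ha : ∀ k, 1 ≤ k → 1 ≤ (a k).natDegree) (k : ℕ) :
    0 < polyAbv F (qSeq F a (k + 1)) :=
  ((polyAbv F).nonneg _).trans_lt (polyAbv_qSeq_lt_succ ha k)

lemma two_pow_le_polyAbv_qSeq (ha : ∀ k, 1 ≤ k → 1 ≤ (a k).natDegree) (k : ℕ) :
    (2 : ℝ) ^ k ≤ polyAbv F (qSeq F a (k + 1)) := by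
  induction k with
  | zero => simp [qSeq]
  | succ k ih =>
    rw [polyAbv_qSeq_add_two ha k, pow_succ']
    exact mul_le_mul (two_le_polyAbv (ha (k + 1) (by lia))) ih (by positivity)
      ((polyAbv F).nonneg _)

lemma tendsto_polyAbv_qSeq (ha : ∀ k, 1 ≤ k → 1 ≤ (a k).natDegree) :
    Tendsto (fun k ↦ polyAbv F (qSeq F a k)) atTop atTop :=
  (tendsto_add_atTop_iff_nat 1).1 <|
    tendsto_atTop_mono (two_pow_le_polyAbv_qSeq ha) (tendsto_pow_atTop_atTop_of_one_lt one_lt_two)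

lemma polyAbv_pSeq_le_qSeq (ha₀ : a 0 = 0) (ha : ∀ k, 1 ≤ k → 1 ≤ (a k).natDegree) (k : ℕ) :
    polyAbv F (pSeq F a (k + 1)) ≤ polyAbv F (qSeq F a (k + 1)) := by
  induction k using Nat.twoStepInduction with
  | zero => simp [pSeq, qSeq, ha₀]
  | one =>
    simpa [pSeq, qSeq, ha₀] using one_le_polyAbv (ne_zero_of_natDegree_gt (ha 1 le_rfl))
  | more k ih₀ ih₁ =>
    rw [isContinuantSeq_pSeq a (k + 1)]
    refine (isNonarchimedean_polyAbv F _ _).trans (max_le ?_ ?_)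
    · rw [polyAbv_qSeq_add_two ha (k + 1), map_mul]
      exact mul_le_mul_of_nonneg_left ih₁ ((polyAbv F).nonneg _)
    · exact ih₀.trans ((strictMono_polyAbv_qSeq ha).monotone (by lia))

lemma polyAbv_qSeq_mul_sub (ha : ∀ k, 1 ≤ k → 1 ≤ (a k).natDegree) {i j : ℕ}
    (hij : a (i + 1) ≠ a (j + 1)) :
    polyAbv F (qSeq F a (i + 1) * qSeq F a (j + 2) - qSeq F a (i + 2) * qSeq F a (j + 1)) =
      polyAbv F (a (j + 1) - a (i + 1)) *
        (polyAbv F (qSeq F a (i + 1)) * polyAbv F (qSeq F a (j + 1))) := by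
  have hi := polyAbv_qSeq_lt_succ ha i
  have hj := polyAbv_qSeq_lt_succ ha j
  have hi_pos := polyAbv_qSeq_succ_pos ha i
  have hj_pos := polyAbv_qSeq_succ_pos ha j
  have hdiff := one_le_polyAbv (sub_ne_zero.2 hij.symm)
  have hsplit : qSeq F a (i + 1) * qSeq F a (j + 2) - qSeq F a (i + 2) * qSeq F a (j + 1) =
      (a (j + 1) - a (i + 1)) * (qSeq F a (i + 1) * qSeq F a (j + 1)) +
        (qSeq F a (i + 1) * qSeq F a j + -(qSeq F a i * qSeq F a (j + 1))) := by
    rw [isContinuantSeq_qSeq a i, isContinuantSeq_qSeq a j]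
    ring
  have hlt : polyAbv F (qSeq F a (i + 1) * qSeq F a j + -(qSeq F a i * qSeq F a (j + 1))) <
      polyAbv F ((a (j + 1) - a (i + 1)) * (qSeq F a (i + 1) * qSeq F a (j + 1))) := by
    calc _ ≤ max _ _ := isNonarchimedean_polyAbv F _ _
      _ < polyAbv F (qSeq F a (i + 1)) * polyAbv F (qSeq F a (j + 1)) := by
        rw [(polyAbv F).map_neg, map_mul, map_mul]
        exact max_lt (by gcongr) (by gcongr)
      _ ≤ _ := by
        rw [map_mul, map_mul]
        exact le_mul_of_one_le_left (by positivity) hdiff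
  rw [hsplit, (isNonarchimedean_polyAbv F).add_eq_left_of_lt hlt, map_mul, map_mul]

lemma Hpoly_convForm_le (ha₀ : a 0 = 0) (ha : ∀ k, 1 ≤ k → 1 ≤ (a k).natDegree) {k : ℕ}
    (hk : 1 ≤ k) : Hpoly F (convForm a k) ≤ polyAbv F (qSeq F a k) := by
  obtain ⟨k, rfl⟩ := Nat.exists_eq_add_of_le' hk
  refine (Hpoly_sub_le _ _).trans ?_
  rw [Hpoly_C_mul_X, Hpoly_C]
  exact max_le le_rfl (polyAbv_pSeq_le_qSeq ha₀ ha k)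

lemma Hpoly_periodPoly_le (ha₀ : a 0 = 0) (ha : ∀ k, 1 ≤ k → 1 ≤ (a k).natDegree) {n : ℕ}
    (hn : 1 ≤ n) (m : ℕ) : Hpoly F (periodPoly a n m) ≤
      polyAbv F (qSeq F a (n + 1)) * polyAbv F (qSeq F a (n + m + 1)) := by
  have hle {i j : ℕ} (hi : 1 ≤ i) (hin : i ≤ n + 1) (hj : 1 ≤ j) (hjn : j ≤ n + m + 1) :
      Hpoly F (convForm a i * convForm a j) ≤
        polyAbv F (qSeq F a (n + 1)) * polyAbv F (qSeq F a (n + m + 1)) := by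
    have hmono := (strictMono_polyAbv_qSeq ha).monotone
    rw [Hpoly_mul]
    exact mul_le_mul ((Hpoly_convForm_le ha₀ ha hi).trans (hmono hin))
      ((Hpoly_convForm_le ha₀ ha hj).trans (hmono hjn))
      (((polyAbv F).nonneg _).trans (polyAbv_coeff_le_Hpoly _ 0)) ((polyAbv F).nonneg _)
  exact (Hpoly_sub_le _ _).trans (max_le (hle hn (by lia) (by lia) le_rfl)
    (hle (by lia) le_rfl (by lia) (by lia)))

lemma polyAbv_mul_le_Hpoly_periodPoly (ha : ∀ k, 1 ≤ k → 1 ≤ (a k).natDegree) {n m : ℕ}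
    (hn : 1 ≤ n) (hne : a n ≠ a (n + m)) :
    polyAbv F (qSeq F a (n + 1)) * polyAbv F (qSeq F a (n + m + 1)) ≤
      polyAbv F (a n) * polyAbv F (a (n + m)) * Hpoly F (periodPoly a n m) := by
  obtain ⟨i, rfl⟩ := Nat.exists_eq_add_of_le' hn
  obtain ⟨j, hj⟩ : ∃ j, i + 1 + m = j + 1 := ⟨i + m, by lia⟩
  have hcoeff := coeff_two_periodPoly a (i + 1) m
  rw [hj] at hne hcoeff ⊢
  rw [polyAbv_qSeq_add_two ha i, polyAbv_qSeq_add_two ha j]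
  calc _ = polyAbv F (a (i + 1)) * polyAbv F (a (j + 1)) *
        (1 * (polyAbv F (qSeq F a (i + 1)) * polyAbv F (qSeq F a (j + 1)))) := by ring
    _ ≤ polyAbv F (a (i + 1)) * polyAbv F (a (j + 1)) * (polyAbv F (a (j + 1) - a (i + 1)) *
        (polyAbv F (qSeq F a (i + 1)) * polyAbv F (qSeq F a (j + 1)))) := by
      gcongr
      exact one_le_polyAbv (sub_ne_zero.2 hne.symm)
    _ = polyAbv F (a (i + 1)) * polyAbv F (a (j + 1)) *
        polyAbv F ((periodPoly a (i + 1) m).coeff 2) := by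
      rw [hcoeff, polyAbv_qSeq_mul_sub ha hne]
    _ ≤ _ := by
      gcongr
      exact polyAbv_coeff_le_Hpoly _ 2

end ContinuantSize

section Convergence

variable {F : Type} [Field F] [Fintype F] {a : ℕ → F[X]} {ξ : K F}

lemma IsCFOf.kAbv_evalK_convForm (h : IsCFOf F ξ a) (k : ℕ) :
    kAbv F (evalK F (convForm a (k + 1)) ξ) = (polyAbv F (qSeq F a (k + 2)))⁻¹ := by
  have hq := polyAbv_qSeq_succ_pos h.1 k
  have hqK : polyToK F (qSeq F a (k + 1)) ≠ 0 :=
    (map_ne_zero_iff _ (polyToK_injective F)).2 ((polyAbv F).pos_iff.1 hq)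
  have herr : kAbv F (ξ - polyToK F (pSeq F a (k + 1)) / polyToK F (qSeq F a (k + 1))) =
      (polyAbv F (qSeq F a (k + 1)) * polyAbv F (qSeq F a (k + 2)))⁻¹ := h.2 k
  calc kAbv F (evalK F (convForm a (k + 1)) ξ)
      = kAbv F (polyToK F (qSeq F a (k + 1)) *
          (ξ - polyToK F (pSeq F a (k + 1)) / polyToK F (qSeq F a (k + 1)))) := by
        rw [evalK_convForm, mul_sub, mul_div_cancel₀ _ hqK]
    _ = polyAbv F (qSeq F a (k + 1)) *
          (polyAbv F (qSeq F a (k + 1)) * polyAbv F (qSeq F a (k + 2)))⁻¹ := by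
        rw [map_mul, herr, kAbv_polyToK]
    _ = _ := by rw [mul_inv, mul_inv_cancel_left₀ hq.ne']

lemma IsCFOf.tendsto_kAbv_evalK_convForm (h : IsCFOf F ξ a) :
    Tendsto (fun k ↦ kAbv F (evalK F (convForm a k) ξ)) atTop (nhds 0) := by
  rw [← tendsto_add_atTop_iff_nat 1]
  simp only [h.kAbv_evalK_convForm]
  exact ((tendsto_add_atTop_iff_nat 2).2 (tendsto_polyAbv_qSeq h.1)).inv_tendsto_atTop

lemma IsCFOf.linear_ne_zero (h : IsCFOf F ξ a) (r s : F[X]) (hs : s ≠ 0) :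
    polyToK F s * ξ + polyToK F r ≠ 0 := fun hrs ↦ by
  have hle (k : ℕ) : 1 ≤ polyAbv F s * kAbv F (evalK F (convForm a (k + 1)) ξ) := by
    let f := -(qSeq F a (k + 1) * r + s * pSeq F a (k + 1))
    have hf : polyToK F s * evalK F (convForm a (k + 1)) ξ = polyToK F f := by
      simp only [f, evalK_convForm, map_neg, map_add, map_mul]
      linear_combination polyToK F (qSeq F a (k + 1)) * hrs
    have hf_abv : polyAbv F s * kAbv F (evalK F (convForm a (k + 1)) ξ) = polyAbv F f := by
      rw [← kAbv_polyToK, ← map_mul, hf, kAbv_polyToK]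
    rw [hf_abv]
    refine one_le_polyAbv ((polyAbv F).pos_iff.1 ?_)
    rw [← hf_abv, h.kAbv_evalK_convForm]
    exact mul_pos ((polyAbv F).pos hs) (inv_pos.2 (polyAbv_qSeq_succ_pos h.1 _))
  have hlim := ((tendsto_add_atTop_iff_nat 1).2 h.tendsto_kAbv_evalK_convForm).const_mul
    (polyAbv F s)
  rw [mul_zero] at hlim
  exact (ge_of_tendsto' hlim hle).not_gt one_pos

lemma IsCFOf.evalK_periodPoly_eq_zero (h : IsCFOf F ξ a) {n m : ℕ}
    (hper : ∀ i, n < i → a (i + m) = a i) : evalK F (periodPoly a n m) ξ = 0 := by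
  have hx := (isContinuantSeq_evalK_convForm a ξ).shift n
  have hy : IsContinuantSeq (fun k ↦ polyToK F (a (n + k)))
      fun k ↦ evalK F (convForm a (n + m + k)) ξ :=
    ((isContinuantSeq_evalK_convForm a ξ).shift (n + m)).congr fun k ↦ by
      rw [← hper (n + (k + 1)) (by lia), show n + (k + 1) + m = n + m + (k + 1) by lia]
  have hlim (j : ℕ) : Tendsto (fun k ↦ kAbv F (evalK F (convForm a (j + k)) ξ)) atTop (nhds 0) := by
    simpa only [add_comm j] using (tendsto_add_atTop_iff_nat j).2 h.tendsto_kAbv_evalK_convForm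
  have hcas := hx.casoratian_eq_zero hy (kAbv F) (hlim n) (hlim (n + m))
  rw [evalK, periodPoly, eval₂_sub, eval₂_mul, eval₂_mul]
  exact (neg_sub _ _).symm.trans (neg_eq_zero.2 hcas)

end Convergence

section QuadraticHeight

variable {F : Type} [Field F] [Fintype F] {a : ℕ → F[X]} {ξ : K F}

lemma periodPoly_ne_zero (ha : ∀ k, 1 ≤ k → 1 ≤ (a k).natDegree) {n m : ℕ} (hn : 1 ≤ n)
    (hne : a n ≠ a (n + m)) : periodPoly a n m ≠ 0 := fun h ↦ by
  have hle := polyAbv_mul_le_Hpoly_periodPoly ha hn hne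
  rw [h, ← C_0, Hpoly_C, map_zero, mul_zero] at hle
  exact (mul_pos (polyAbv_qSeq_succ_pos ha n) (polyAbv_qSeq_succ_pos ha (n + m))).not_ge hle

lemma IsCFOf.isMinPolyOf_minPolyPrim (h : IsCFOf F ξ a) {n m : ℕ} (hn : 1 ≤ n)
    (hper : ∀ i, n < i → a (i + m) = a i) (hne : a n ≠ a (n + m)) :
    IsMinPolyOf F (minPolyPrim F (toL F ξ)) (toL F ξ) :=
  (isAlgElem_toL (periodPoly_ne_zero h.1 hn hne)
    (h.evalK_periodPoly_eq_zero hper)).isMinPolyOf_minPolyPrim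

lemma IsCFOf.exists_periodPoly_eq_C_mul (h : IsCFOf F ξ a) {n m : ℕ} (hn : 1 ≤ n)
    (hper : ∀ i, n < i → a (i + m) = a i) (hne : a n ≠ a (n + m)) :
    (minPolyPrim F (toL F ξ)).natDegree = 2 ∧
      ∃ g ≠ 0, periodPoly a n m = C g * minPolyPrim F (toL F ξ) :=
  (h.isMinPolyOf_minPolyPrim hn hper hne).natDegree_eq_two h.linear_ne_zero
    (periodPoly_ne_zero h.1 hn hne) (natDegree_periodPoly_le a n m)
    (h.evalK_periodPoly_eq_zero hper)

theorem IsCFOf.heightAlg_bounds_of_periodic (h : IsCFOf F ξ a) (ha₀ : a 0 = 0) {n m : ℕ}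
    (hn : 1 ≤ n) (hper : ∀ i, n < i → a (i + (m + 1)) = a i) (hne : a n ≠ a (n + (m + 1)))
    {e : F[X]} (he : e ≠ 0) (hdvd : ∀ g, g ∣ pSeq F (fun i ↦ a (n + 1 + i)) m →
      g ∣ qSeq F (fun i ↦ a (n + 1 + i)) (m + 1) → g ∣ e) :
    (∃ P, IsMinPolyOf F P (toL F ξ) ∧ P.natDegree = 2) ∧
    (polyAbv F (a n) * polyAbv F (a (n + (m + 1))) * polyAbv F e)⁻¹ *
      (polyAbv F (qSeq F a (n + 1)) * polyAbv F (qSeq F a (n + (m + 1) + 1))) ≤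
        heightAlg F (toL F ξ) ∧
    heightAlg F (toL F ξ) ≤
      polyAbv F (qSeq F a (n + 1)) * polyAbv F (qSeq F a (n + (m + 1) + 1)) := by
  obtain ⟨hdeg, g, hg, hfactor⟩ := h.exists_periodPoly_eq_C_mul hn hper hne
  have hheight : Hpoly F (periodPoly a n (m + 1)) = polyAbv F g * heightAlg F (toL F ξ) := by
    rw [hfactor, Hpoly_mul, Hpoly_C, heightAlg]
  have hge : g ∣ e := (dvd_of_C_dvd_periodPoly ⟨_, hfactor⟩).elim (hdvd g)
  have hheight_nonneg : 0 ≤ heightAlg F (toL F ξ) :=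
    ((polyAbv F).nonneg _).trans (polyAbv_coeff_le_Hpoly _ 0)
  refine ⟨⟨_, h.isMinPolyOf_minPolyPrim hn hper hne, hdeg⟩, ?_, ?_⟩
  · have han := (polyAbv F).pos (ne_zero_of_natDegree_gt (h.1 n hn))
    have ham := (polyAbv F).pos (ne_zero_of_natDegree_gt (h.1 (n + (m + 1)) (by lia)))
    have he_pos := (polyAbv F).pos he
    rw [inv_mul_le_iff₀ (by positivity)]
    calc _ ≤ polyAbv F (a n) * polyAbv F (a (n + (m + 1))) * Hpoly F (periodPoly a n (m + 1)) :=
          polyAbv_mul_le_Hpoly_periodPoly h.1 hn hne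
      _ = polyAbv F (a n) * polyAbv F (a (n + (m + 1))) * polyAbv F g *
            heightAlg F (toL F ξ) := by rw [hheight, mul_assoc _ (polyAbv F g)]
      _ ≤ _ := by
        gcongr
        exact polyAbv_le_of_dvd he hge
  · calc heightAlg F (toL F ξ) ≤ polyAbv F g * heightAlg F (toL F ξ) :=
          le_mul_of_one_le_left hheight_nonneg (one_le_polyAbv hg)
      _ = Hpoly F (periodPoly a n (m + 1)) := hheight.symm
      _ ≤ _ := Hpoly_periodPoly_le ha₀ h.1 hn (m + 1)

theorem IsCFOf.heightAlg_bounds_of_eventually_const (h : IsCFOf F ξ a) (ha₀ : a 0 = 0)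
    {b c : F[X]} (hcb : c ≠ b) {n : ℕ} (hn : 1 ≤ n) (han : a n = c) (hab : ∀ i, n < i → a i = b) :
    (∃ P, IsMinPolyOf F P (toL F ξ) ∧ P.natDegree = 2) ∧
    (polyAbv F c)⁻¹ * polyAbv F (qSeq F a (n + 1)) ^ 2 ≤ heightAlg F (toL F ξ) ∧
    heightAlg F (toL F ξ) ≤ polyAbv F b * polyAbv F (qSeq F a (n + 1)) ^ 2 := by
  have hb : a (n + 1) = b := hab _ n.lt_succ_self
  have hb_pos : 0 < polyAbv F b :=
    (polyAbv F).pos (hb ▸ ne_zero_of_natDegree_gt (h.1 (n + 1) (by lia)))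
  obtain ⟨hquad, hlower, hupper⟩ := h.heightAlg_bounds_of_periodic (m := 0) ha₀ hn
    (fun i hi ↦ by rw [hab i hi, hab _ (by lia)]) (by rwa [han, hb]) one_ne_zero
    fun g hg _ ↦ hg
  rw [zero_add, polyAbv_qSeq_add_two h.1 n, han, hb, map_one, mul_one] at hlower
  rw [zero_add, polyAbv_qSeq_add_two h.1 n, hb] at hupper
  refine ⟨hquad, hlower.trans_eq' ?_, hupper.trans_eq (by ring)⟩
  field_simp

theorem IsCFOf.heightAlg_bounds_of_eventually_block (h : IsCFOf F ξ a) (ha₀ : a 0 = 0)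
    {b c d : F[X]} (hbd : b ≠ d) (hcd : c ≠ d) {n m : ℕ} (hn : 1 ≤ n) (hm : 2 ≤ m)
    (han : a n = c) (hab : ∀ i, n < i → a i = if (i - n) % m = 0 then d else b) :
    (∃ P, IsMinPolyOf F P (toL F ξ) ∧ P.natDegree = 2) ∧
    (polyAbv F c * polyAbv F d * polyAbv F (d - b))⁻¹ *
      polyAbv F (qSeq F a (n + 1) * qSeq F a (n + m + 1)) ≤ heightAlg F (toL F ξ) ∧
    heightAlg F (toL F ξ) ≤ polyAbv F (qSeq F a (n + 1) * qSeq F a (n + m + 1)) := by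
  obtain ⟨m, rfl⟩ := Nat.exists_eq_add_of_le' (one_le_two.trans hm)
  have hd : a (n + (m + 1)) = d := by
    rw [hab _ (by lia), Nat.add_sub_cancel_left, Nat.mod_self, if_pos rfl]
  have hb (i : ℕ) (hi : i < m) : a (n + 1 + i) = b := by
    rw [hab _ (by lia), if_neg]
    rw [Nat.mod_eq_of_lt (by lia)]
    lia
  have hper (i : ℕ) (hi : n < i) : a (i + (m + 1)) = a i := by
    rw [hab i hi, hab _ (by lia), Nat.sub_add_comm hi.le, Nat.add_mod_right]
  have hd' : a (n + 1 + m) = d := by rw [← hd, add_right_comm, add_assoc]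
  have hbounds := h.heightAlg_bounds_of_periodic ha₀ hn hper (by rwa [han, hd])
    (sub_ne_zero.2 hbd.symm) fun g ↦ dvd_sub_of_dvd_pSeq_of_dvd_qSeq hb hd' (by lia)
  rwa [han, hd, ← map_mul (polyAbv F) (qSeq F a (n + 1))] at hbounds

end QuadraticHeight

theorem stmt13 (Fq : Type) [Field Fq] [Fintype Fq]
    (b c d : Polynomial Fq)
    (hb : 1 ≤ b.natDegree) (hc : 1 ≤ c.natDegree) (hd : 1 ≤ d.natDegree)
    (hbc : b ≠ c) (hbd : b ≠ d) (hcd : c ≠ d) :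
    ∃ C₁ C₂ C₃ C₄ : ℝ, 0 < C₁ ∧ 0 < C₂ ∧ 0 < C₃ ∧ 0 < C₄ ∧
    (∀ n : ℕ, 1 ≤ n → ∀ a : ℕ → Polynomial Fq, a 0 = 0 →
      (∀ i : ℕ, 1 ≤ i → i ≤ n - 1 → 1 ≤ (a i).natDegree) →
      a n = c → (∀ i : ℕ, n < i → a i = b) →
      ∀ ξ : K Fq, IsCFOf Fq ξ a →
        (∃ P, IsMinPolyOf Fq P (toL Fq ξ) ∧ P.natDegree = 2) ∧
        C₁ * kabs Fq (polyToK Fq (qSeq Fq a (n + 1))) ^ 2 ≤ heightAlg Fq (toL Fq ξ) ∧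
        heightAlg Fq (toL Fq ξ) ≤ C₂ * kabs Fq (polyToK Fq (qSeq Fq a (n + 1))) ^ 2) ∧
    (∀ n : ℕ, 1 ≤ n → ∀ m : ℕ, 2 ≤ m → ∀ a : ℕ → Polynomial Fq, a 0 = 0 →
      (∀ i : ℕ, 1 ≤ i → i ≤ n - 1 → 1 ≤ (a i).natDegree) →
      a n = c → (∀ i : ℕ, n < i → a i = if (i - n) % m = 0 then d else b) →
      ∀ ζ : K Fq, IsCFOf Fq ζ a →
        (∃ P, IsMinPolyOf Fq P (toL Fq ζ) ∧ P.natDegree = 2) ∧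
        C₃ * kabs Fq (polyToK Fq (qSeq Fq a (n + 1) * qSeq Fq a (n + m + 1))) ≤
          heightAlg Fq (toL Fq ζ) ∧
        heightAlg Fq (toL Fq ζ) ≤
          C₄ * kabs Fq (polyToK Fq (qSeq Fq a (n + 1) * qSeq Fq a (n + m + 1)))) := by
  have abv_pos {f : Fq[X]} (hf : 1 ≤ f.natDegree) : 0 < polyAbv Fq f :=
    (polyAbv Fq).pos (ne_zero_of_natDegree_gt hf)
  have hb_pos := abv_pos hb
  have hc_pos := abv_pos hc
  have hd_pos := abv_pos hd
  have hdb_pos := (polyAbv Fq).pos (sub_ne_zero.2 hbd.symm)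
  refine ⟨(polyAbv Fq c)⁻¹, polyAbv Fq b, (polyAbv Fq c * polyAbv Fq d * polyAbv Fq (d - b))⁻¹, 1,
    by positivity, by positivity, by positivity, one_pos, ?_, ?_⟩
  · intro n hn a ha₀ _ han hab ξ hξ
    exact hξ.heightAlg_bounds_of_eventually_const ha₀ hbc.symm hn han hab
  · intro n hn m hm a ha₀ _ han hab ζ hζ
    rw [one_mul]
    exact hζ.heightAlg_bounds_of_eventually_block ha₀ hbd hcd hn hm han hab

end Ooto
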